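/- If n < m are natural numbers and 1 < k ≤ ℓ are natural numbers, then ⟨k→ℓ⟩n < ⟨k→ℓ⟩m; in particular, the base-change map x ↦ ⟨k→ℓ⟩x is strictly increasing on ℕ. -/

import Mathlib

/-- The base-`k` Ackermann function `A_a(k, b)`:
`A_0(k, b) = k ^ b` and `A_{a+1}(k, b) = A_a^k(k, A_{a+1}(k, b-1))`,
with the auxiliary value `A_{a+1}(k, -1) = 1`
(equivalently, `A_{a+1}(k, b) = (A_a^k)^[b+1] (1)`). -/
def Ack (k : ℕ) : ℕ → ℕ → ℕ
  | 0, b => k ^ b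
  | a + 1, b => ((Ack k a)^[k])^[b + 1] 1

/-- `IsSandwich k m n a b ms` says that `(A_{a i}(k, b i))_{i=1}^n` is a
`k`-sandwiching sequence for `m`, with sandwiching values `(ms i)_{i=0}^n`:
`ms 0 = 0`; for each `i < n`, `A_{a (i+1)} (ms i) ≤ m < A_{a (i+1) + 1} (ms i)`,
`A_{a (i+1)} (b (i+1)) ≤ m < A_{a (i+1)} (b (i+1) + 1)`, and
`ms (i+1) = A_{a (i+1)} (b (i+1))`; and `A_0 (ms n) > m`. -/
structure IsSandwich (k m n : ℕ) (a b ms : ℕ → ℕ) : Prop where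
  ms_zero : ms 0 = 0
  idx_lo : ∀ i < n, Ack k (a (i + 1)) (ms i) ≤ m
  idx_hi : ∀ i < n, m < Ack k (a (i + 1) + 1) (ms i)
  arg_lo : ∀ i < n, Ack k (a (i + 1)) (b (i + 1)) ≤ m
  arg_hi : ∀ i < n, m < Ack k (a (i + 1)) (b (i + 1) + 1)
  ms_succ : ∀ i < n, ms (i + 1) = Ack k (a (i + 1)) (b (i + 1))
  halt : m < Ack k 0 (ms n)

/-- `NF k m a b c` says that `m ≡_k A_a b + c`, i.e. `m` has `k`-normal form
`A_a b + c` (so `m = A_a b + c` and the `k`-sandwiching sequence of `m` ends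
with the pair `(a, b)`). -/
def NF (k m a b c : ℕ) : Prop :=
  m = Ack k a b + c ∧
    ∃ n as bs ms, 1 ≤ n ∧ IsSandwich k m n as bs ms ∧ a = as n ∧ b = bs n

/-- `BCH k l m v` is the graph of the base-change operation `⟨k→l⟩`:
`⟨k→l⟩0 = 0` and, for `m ≡_k A_a(k, b) + c`,
`⟨k→l⟩m = A_{⟨k→l⟩a}(l, ⟨k→l⟩b) + ⟨k→l⟩c`. -/
inductive BCH (k l : ℕ) : ℕ → ℕ → Prop
  | zero : BCH k l 0 0
  | step (m a b c a' b' c' : ℕ) : NF k m a b c →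
      BCH k l a a' → BCH k l b b' → BCH k l c c' →
      BCH k l m (Ack l a' b' + c')

/-!
Write `f` for the base change `⟨k→l⟩` with `k < l`; for `k = l` it is the identity. It suffices to
show `f m < f (m + 1)` when `f` is already known to be strictly increasing on `{0, …, m}`. If the
normal form of `m + 1` has a nonzero remainder, then `m` has the same leading term. Otherwise
`m + 1 = A_a(k, b)`. If `a = j + 1`, unfolding the recursion writes `m + 1` as an iterate
`A_j^N(k, s)` such that the sandwiching sequences of `m` and of the intermediate iterates pass
through a common value. Hence `f` commutes with `A_j` along this iteration, and `f m` is smaller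
than `A_{f j}^N(l, f s)`. By monotonicity below `m`, and because `k < l`, unfolding `f (m + 1)` in
base `l` yields an iteration from `f s` of at least the same level and length. If `a = 0`, products
with powers of `k` play the role of the iterates.
-/

theorem exists_le_and_lt_succ_of_strictMono {f : ℕ → ℕ} (hf : StrictMono f) {m : ℕ}
    (h : f 0 ≤ m) : ∃ a, f a ≤ m ∧ m < f (a + 1) := by
  refine ⟨Nat.findGreatest (f · ≤ m) m,
    Nat.findGreatest_spec (P := (f · ≤ m)) (Nat.zero_le m) h, ?_⟩
  by_contra! hle
  exact Nat.findGreatest_is_greatest (P := (f · ≤ m)) (Nat.lt_succ_self _)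
    (hf.le_apply.trans hle) hle

theorem eq_of_le_of_lt_succ_of_strictMono {f : ℕ → ℕ} (hf : StrictMono f) {m a b : ℕ}
    (ha : f a ≤ m) (ha' : m < f (a + 1)) (hb : f b ≤ m) (hb' : m < f (b + 1)) : a = b := by
  have hab : a < b + 1 := hf.lt_iff_lt.mp (ha.trans_lt hb')
  have hba : b < a + 1 := hf.lt_iff_lt.mp (hb.trans_lt ha')
  omega

theorem exists_seq_of_reflTransGen {α : Type*} {r : α → α → Prop} {x y : α}
    (h : Relation.ReflTransGen r x y) :
    ∃ (n : ℕ) (u : ℕ → α), u 0 = x ∧ u n = y ∧ ∀ i < n, r (u i) (u (i + 1)) := by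
  induction h using Relation.ReflTransGen.head_induction_on with
  | refl => exact ⟨0, fun _ => y, rfl, rfl, by simp⟩
  | @head x x' hxx' _ ih =>
    obtain ⟨n, u, rfl, hn, hu⟩ := ih
    refine ⟨n + 1, fun i => Nat.casesOn i x u, rfl, hn, ?_⟩
    rintro (_ | i) hi
    · exact hxx'
    · exact hu i (by omega)

theorem pow_sub_mul_le_pow {k t u : ℕ} (hk : 1 < k) (hu : k ^ t ≤ u) :
    k ^ (k ^ t - t) * u ≤ k ^ u := by
  obtain ⟨v, rfl⟩ := Nat.exists_eq_add_of_le hu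
  have ht : t < k ^ t := Nat.lt_pow_self hk
  have hv : v < k ^ v := Nat.lt_pow_self hk
  calc k ^ (k ^ t - t) * (k ^ t + v)
      ≤ k ^ (k ^ t - t) * (k ^ t * k ^ v) := by gcongr; nlinarith
    _ = k ^ (k ^ t + v) := by rw [← pow_add, ← pow_add]; congr 1; omega

namespace Ack

variable {k a p n c : ℕ}

theorem zero_left (k b : ℕ) : Ack k 0 b = k ^ b := by
  rw [Ack]

theorem succ_left (k a b : ℕ) : Ack k (a + 1) b = (Ack k a)^[k * (b + 1)] 1 := by
  rw [Ack, Function.iterate_mul]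

theorem succ_left_add (k a b d : ℕ) :
    Ack k (a + 1) (b + d) = (Ack k a)^[k * d] (Ack k (a + 1) b) := by
  rw [succ_left, succ_left, ← Function.iterate_add_apply]
  congr 2
  ring

theorem strictMono_right_and_pos (hk : 1 < k) (a : ℕ) :
    StrictMono (Ack k a) ∧ 0 < Ack k a 0 := by
  induction a with
  | zero =>
    simp only [StrictMono, zero_left]
    exact ⟨fun _ _ h => Nat.pow_lt_pow_right hk h, Nat.pow_pos (by omega)⟩
  | succ a ih =>
    obtain ⟨hmono, hpos⟩ := ih
    have hone : 1 < Ack k a 1 := Nat.lt_of_le_of_lt hpos (hmono Nat.one_pos)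
    have hiter := hmono.strictMono_iterate_of_lt_map hone
    constructor
    · intro x y hxy
      rw [succ_left, succ_left]
      exact hiter (Nat.mul_lt_mul_of_pos_left (by omega) (by omega))
    · rw [succ_left]
      exact hiter.monotone (Nat.zero_le _)

theorem strictMono_right (hk : 1 < k) (a : ℕ) : StrictMono (Ack k a) :=
  (strictMono_right_and_pos hk a).1

theorem lt_right (hk : 1 < k) (a b : ℕ) : b < Ack k a b := by
  obtain ⟨hmono, hpos⟩ := strictMono_right_and_pos hk a
  have : b + Ack k a 0 ≤ Ack k a b := hmono.add_le_nat b 0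
  omega

theorem pos (hk : 1 < k) (a b : ℕ) : 0 < Ack k a b :=
  (Nat.zero_le b).trans_lt (lt_right hk a b)

theorem strictMono_iterate (hk : 1 < k) (a s : ℕ) : StrictMono fun n => (Ack k a)^[n] s :=
  (strictMono_right hk a).strictMono_iterate_of_lt_map (lt_right hk a s)

theorem add_le_iterate (hk : 1 < k) (a s n : ℕ) : n + s ≤ (Ack k a)^[n] s :=
  (strictMono_iterate hk a s).add_le_nat n 0

theorem strictMono_left (hk : 1 < k) (b : ℕ) : StrictMono fun a => Ack k a b := by
  refine strictMono_nat_of_lt_succ fun a => ?_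
  calc Ack k a b < Ack k a (b + 1) := strictMono_right hk a b.lt_succ_self
    _ ≤ Ack k a ((Ack k a)^[b] 1) := (strictMono_right hk a).monotone (add_le_iterate hk a 1 b)
    _ = (Ack k a)^[b + 1] 1 := (Function.iterate_succ_apply' _ _ _).symm
    _ ≤ (Ack k a)^[k * (b + 1)] 1 :=
        (strictMono_iterate hk a 1).monotone (Nat.le_mul_of_pos_left _ (by omega))
    _ = Ack k (a + 1) b := (succ_left k a b).symm

theorem succ_right_le (hk : 1 < k) (a b : ℕ) : Ack k a (b + 1) ≤ Ack k a (Ack k a b) :=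
  (strictMono_right hk a).monotone (lt_right hk a b)

theorem lt_left (hk : 1 < k) (a b : ℕ) : a < Ack k a b := by
  have : a + Ack k 0 b ≤ Ack k a b := (strictMono_left hk b).add_le_nat a 0
  have := pos hk 0 b
  omega

theorem exists_succ_left_eq (hk : 1 < k) (a b : ℕ) : ∃ t, Ack k (a + 1) b = Ack k a t := by
  obtain ⟨n, hn⟩ : ∃ n, k * (b + 1) = n + 1 :=
    Nat.exists_eq_add_one.mpr (Nat.mul_pos (by omega) b.succ_pos)
  exact ⟨(Ack k a)^[n] 1, by rw [succ_left, hn, Function.iterate_succ_apply']⟩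

theorem exists_eq_of_lt (hk : 1 < k) (hap : a < p) (q : ℕ) : ∃ t, Ack k p q = Ack k a t := by
  induction p, hap using Nat.le_induction generalizing q with
  | base => exact exists_succ_left_eq hk a q
  | succ p _ ih =>
    obtain ⟨t, ht⟩ := exists_succ_left_eq hk p q
    rw [ht]
    exact ih t

theorem mul_le_succ_left (hk : 1 < k) (a b : ℕ) : k * b ≤ Ack k (a + 1) b := by
  rw [succ_left]
  have := add_le_iterate hk a 1 (k * (b + 1))
  linarith

theorem iterate_le_iterate (hk : 1 < k) (hac : a ≤ c) {n n' : ℕ} (hn : n ≤ n') (s : ℕ) :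
    (Ack k a)^[n] s ≤ (Ack k c)^[n'] s :=
  ((strictMono_right hk a).monotone.iterate_le_of_le
    (fun b => (strictMono_left hk b).monotone hac) n s).trans
    ((strictMono_iterate hk c s).monotone hn)

theorem iterate_one_le_of_lt (hk : 1 < k) (hac : a < c) {b : ℕ} (hn : n ≤ k * (b + 1)) :
    (Ack k a)^[n] 1 ≤ Ack k c b := by
  obtain ⟨c, rfl⟩ := Nat.exists_eq_add_one.mpr (Nat.zero_lt_of_lt hac)
  rw [succ_left]
  exact iterate_le_iterate hk (by omega) hn 1

theorem iterate_ack_le_of_lt (hk : 1 < k) (hac : a < c) {b d : ℕ} (hn : n ≤ k * d) :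
    (Ack k a)^[n] (Ack k c b) ≤ Ack k c (b + d) := by
  obtain ⟨c, rfl⟩ := Nat.exists_eq_add_one.mpr (Nat.zero_lt_of_lt hac)
  rw [succ_left_add]
  exact iterate_le_iterate hk (by omega) hn _

end Ack

/-- The transition of the sandwiching process of `m` at the sandwiching value `s`: the next pair is
`(a, b)`, and the next sandwiching value is `A_a(k, b)`. -/
structure SandwichStep (k m s a b : ℕ) : Prop where
  idx_lo : Ack k a s ≤ m
  idx_hi : m < Ack k (a + 1) s
  arg_lo : Ack k a b ≤ m
  arg_hi : m < Ack k a (b + 1)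

namespace SandwichStep

variable {k m s a b a' b' v : ℕ}

theorem le_arg (hk : 1 < k) (h : SandwichStep k m s a b) : s ≤ b :=
  Nat.lt_succ_iff.mp ((Ack.strictMono_right hk a).lt_iff_lt.mp (h.idx_lo.trans_lt h.arg_hi))

theorem lt_ack (hk : 1 < k) (h : SandwichStep k m s a b) : s < Ack k a b :=
  (h.le_arg hk).trans_lt (Ack.lt_right hk a b)

theorem ack_zero_le (hk : 1 < k) (h : SandwichStep k m s a b) : Ack k 0 s ≤ m :=
  ((Ack.strictMono_left hk s).monotone (Nat.zero_le a)).trans h.idx_lo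

theorem unique (hk : 1 < k) (h : SandwichStep k m s a b) (h' : SandwichStep k m s a' b') :
    a = a' ∧ b = b' := by
  obtain rfl : a = a' := eq_of_le_of_lt_succ_of_strictMono (Ack.strictMono_left hk s)
    h.idx_lo h.idx_hi h'.idx_lo h'.idx_hi
  exact ⟨rfl, eq_of_le_of_lt_succ_of_strictMono (Ack.strictMono_right hk a)
    h.arg_lo h.arg_hi h'.arg_lo h'.arg_hi⟩

theorem of_le (hk : 1 < k) (h : SandwichStep k m s a b) (hv : Ack k a b ≤ v) (hvm : v ≤ m) :
    SandwichStep k v s a b where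
  idx_lo := ((Ack.strictMono_right hk a).monotone (h.le_arg hk)).trans hv
  idx_hi := hvm.trans_lt h.idx_hi
  arg_lo := hv
  arg_hi := hvm.trans_lt h.arg_hi

theorem idx_lt (hk : 1 < k) (h : SandwichStep k m s a b)
    (h' : SandwichStep k m (Ack k a b) a' b') : a' < a := by
  by_contra! haa'
  have : Ack k a (b + 1) ≤ m := calc
    Ack k a (b + 1) ≤ Ack k a (Ack k a b) := Ack.succ_right_le hk a b
    _ ≤ Ack k a' (Ack k a b) := (Ack.strictMono_left hk _).monotone haa'
    _ ≤ m := h'.idx_lo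
  exact this.not_gt h.arg_hi

end SandwichStep

theorem exists_sandwichStep {k m s : ℕ} (hk : 1 < k) (h : Ack k 0 s ≤ m) :
    ∃ a b, SandwichStep k m s a b := by
  obtain ⟨a, hlo, hhi⟩ := exists_le_and_lt_succ_of_strictMono (Ack.strictMono_left hk s) h
  have hzero : Ack k a 0 ≤ m := ((Ack.strictMono_right hk a).monotone (Nat.zero_le s)).trans hlo
  obtain ⟨b, harg_lo, harg_hi⟩ :=
    exists_le_and_lt_succ_of_strictMono (Ack.strictMono_right hk a) hzero
  exact ⟨a, b, hlo, hhi, harg_lo, harg_hi⟩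

/-- `t` follows `s` as a sandwiching value of `m`. -/
def SandwichNext (k m s t : ℕ) : Prop :=
  ∃ a b, SandwichStep k m s a b ∧ t = Ack k a b

/-- `s` is one of the sandwiching values `m_0 = 0, m_1, …` of `m`. The halting condition is not
imposed, so no length has to be fixed in advance. -/
def IsSandwichValue (k m s : ℕ) : Prop :=
  Relation.ReflTransGen (SandwichNext k m) 0 s

/-- `(a, b)` is one of the pairs `(a_i, b_i)` in the sandwiching sequence of `m`, not necessarily
the last one. -/
def IsSandwichPair (k m a b : ℕ) : Prop :=
  ∃ s, IsSandwichValue k m s ∧ SandwichStep k m s a b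

section Sandwich

variable {k m s t a b a' b' v : ℕ}

theorem SandwichNext.lt (hk : 1 < k) (h : SandwichNext k m s t) : s < t := by
  obtain ⟨a, b, hstep, rfl⟩ := h
  exact hstep.lt_ack hk

theorem SandwichNext.rightUnique (hk : 1 < k) : Relator.RightUnique (SandwichNext k m) := by
  rintro s t t' ⟨a, b, hstep, rfl⟩ ⟨a', b', hstep', rfl⟩
  obtain ⟨rfl, rfl⟩ := hstep.unique hk hstep'
  rfl

theorem le_of_reflTransGen_sandwichNext (hk : 1 < k)
    (h : Relation.ReflTransGen (SandwichNext k m) s t) : s ≤ t := by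
  induction h with
  | refl => exact le_rfl
  | tail _ hnext ih => exact ih.trans (hnext.lt hk).le

theorem isSandwichValue_zero (k m : ℕ) : IsSandwichValue k m 0 :=
  Relation.ReflTransGen.refl

theorem IsSandwichValue.of_le (hk : 1 < k) (h : IsSandwichValue k m s) (hsv : s ≤ v)
    (hvm : v ≤ m) : IsSandwichValue k v s := by
  induction h with
  | refl => exact isSandwichValue_zero k v
  | tail _ hnext ih =>
    have hlt := hnext.lt hk
    obtain ⟨a, b, hstep, rfl⟩ := hnext
    exact (ih (by omega)).tail ⟨a, b, hstep.of_le hk hsv hvm, rfl⟩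

theorem IsSandwichValue.eq_zero_or_exists_pair (h : IsSandwichValue k m s) :
    s = 0 ∨ ∃ a b, IsSandwichPair k m a b ∧ s = Ack k a b := by
  rcases Relation.ReflTransGen.cases_tail h with rfl | ⟨r, hr, a, b, hstep, rfl⟩
  · exact Or.inl rfl
  · exact Or.inr ⟨a, b, ⟨r, hr, hstep⟩, rfl⟩

theorem IsSandwichValue.isSandwichPair (hk : 1 < k) (h : IsSandwichValue k m s)
    (hidx : m < Ack k (a + 1) s) (hsb : s ≤ b) (hlo : Ack k a b ≤ m) (hhi : m < Ack k a (b + 1)) :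
    IsSandwichPair k m a b :=
  ⟨s, h, ((Ack.strictMono_right hk a).monotone hsb).trans hlo, hidx, hlo, hhi⟩

theorem IsSandwichPair.ack_le (h : IsSandwichPair k m a b) : Ack k a b ≤ m :=
  let ⟨_, _, hstep⟩ := h
  hstep.arg_lo

theorem IsSandwichPair.isSandwichValue (h : IsSandwichPair k m a b) :
    IsSandwichValue k m (Ack k a b) :=
  let ⟨_, hs, hstep⟩ := h
  hs.tail ⟨a, b, hstep, rfl⟩

theorem IsSandwichPair.of_le (hk : 1 < k) (h : IsSandwichPair k m a b) (hv : Ack k a b ≤ v)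
    (hvm : v ≤ m) : IsSandwichPair k v a b :=
  let ⟨_, hs, hstep⟩ := h
  ⟨_, hs.of_le hk ((hstep.lt_ack hk).le.trans hv) hvm, hstep.of_le hk hv hvm⟩

theorem IsSandwichPair.idx_lt (hk : 1 < k) (h : IsSandwichPair k m a b)
    (h' : SandwichStep k m (Ack k a b) a' b') : a' < a :=
  let ⟨_, _, hstep⟩ := h
  hstep.idx_lt hk h'

theorem SandwichStep.eq_of_reflTransGen (hk : 1 < k) (hstep : SandwichStep k m s a b)
    (hhalt : m < Ack k 0 (Ack k a b)) (hstep' : SandwichStep k m t a' b')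
    (hreach : Relation.ReflTransGen (SandwichNext k m) s t) : s = t := by
  rcases hreach.cases_head with rfl | ⟨r, hsr, hrt⟩
  · rfl
  · obtain rfl := SandwichNext.rightUnique hk hsr ⟨a, b, hstep, rfl⟩
    have := (Ack.strictMono_right hk 0).monotone (le_of_reflTransGen_sandwichNext hk hrt)
    have := hstep'.ack_zero_le hk
    omega

theorem IsSandwichPair.unique_of_halt (hk : 1 < k) (h : IsSandwichPair k m a b)
    (hhalt : m < Ack k 0 (Ack k a b)) (h' : IsSandwichPair k m a' b')
    (hhalt' : m < Ack k 0 (Ack k a' b')) : a = a' ∧ b = b' := by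
  obtain ⟨s, hs, hstep⟩ := h
  obtain ⟨s', hs', hstep'⟩ := h'
  obtain rfl : s = s' := by
    rcases hs.total_of_right_unique (SandwichNext.rightUnique hk) hs' with hreach | hreach
    · exact hstep.eq_of_reflTransGen hk hhalt hstep' hreach
    · exact (hstep'.eq_of_reflTransGen hk hhalt' hstep hreach).symm
  exact hstep.unique hk hstep'

theorem IsSandwichPair.exists_halt (hk : 1 < k) (h : IsSandwichPair k m a b) :
    ∃ a' b', IsSandwichPair k m a' b' ∧ m < Ack k 0 (Ack k a' b') := by
  induction a using Nat.strong_induction_on generalizing b with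
  | _ a ih =>
    by_cases hhalt : m < Ack k 0 (Ack k a b)
    · exact ⟨a, b, h, hhalt⟩
    · obtain ⟨a', b', hstep⟩ := exists_sandwichStep hk (not_lt.mp hhalt)
      exact ih a' (h.idx_lt hk hstep) ⟨_, h.isSandwichValue, hstep⟩

end Sandwich

section NormalForm

variable {k m n a b c a' b' c' : ℕ} {as bs ms : ℕ → ℕ}

theorem IsSandwich.sandwichStep (h : IsSandwich k m n as bs ms) {i : ℕ} (hi : i < n) :
    SandwichStep k m (ms i) (as (i + 1)) (bs (i + 1)) :=
  ⟨h.idx_lo i hi, h.idx_hi i hi, h.arg_lo i hi, h.arg_hi i hi⟩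

theorem IsSandwich.isSandwichValue (h : IsSandwich k m n as bs ms) {i : ℕ} (hi : i ≤ n) :
    IsSandwichValue k m (ms i) := by
  induction i with
  | zero => rw [h.ms_zero]; exact isSandwichValue_zero k m
  | succ i ih => exact (ih (by omega)).tail ⟨_, _, h.sandwichStep hi, h.ms_succ i hi⟩

theorem IsSandwichPair.exists_isSandwich (h : IsSandwichPair k m a b)
    (hhalt : m < Ack k 0 (Ack k a b)) :
    ∃ n as bs ms, 1 ≤ n ∧ IsSandwich k m n as bs ms ∧ a = as n ∧ b = bs n := by
  obtain ⟨s, hs, hstep⟩ := h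
  obtain ⟨n, u, hzero, rfl, hnext⟩ := exists_seq_of_reflTransGen hs
  choose! α β hαβ using hnext
  let as : ℕ → ℕ := Function.update (fun i => α (i - 1)) (n + 1) a
  let bs : ℕ → ℕ := Function.update (fun i => β (i - 1)) (n + 1) b
  let ms : ℕ → ℕ := Function.update u (n + 1) (Ack k a b)
  have hsteps : ∀ i < n + 1, SandwichStep k m (ms i) (as (i + 1)) (bs (i + 1)) ∧
      ms (i + 1) = Ack k (as (i + 1)) (bs (i + 1)) := by
    intro i hi
    have hms : ms i = u i := Function.update_of_ne hi.ne _ _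
    rcases Nat.lt_succ_iff_lt_or_eq.mp hi with hin | rfl
    · have hne : i + 1 ≠ n + 1 := by omega
      simpa [as, bs, hms, ms, Function.update_of_ne hne] using hαβ i hin
    · simpa [as, bs, hms, ms] using hstep
  refine ⟨n + 1, as, bs, ms, by omega, ?_, by simp [as], by simp [bs]⟩
  exact {
    ms_zero := by simpa [ms] using hzero
    idx_lo := fun i hi => (hsteps i hi).1.idx_lo
    idx_hi := fun i hi => (hsteps i hi).1.idx_hi
    arg_lo := fun i hi => (hsteps i hi).1.arg_lo
    arg_hi := fun i hi => (hsteps i hi).1.arg_hi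
    ms_succ := fun i hi => (hsteps i hi).2
    halt := by simpa [ms] using hhalt }

theorem nf_iff : NF k m a b c ↔
    m = Ack k a b + c ∧ IsSandwichPair k m a b ∧ m < Ack k 0 (Ack k a b) := by
  constructor
  · rintro ⟨hm, n, as, bs, ms, hn, hsand, rfl, rfl⟩
    obtain ⟨n, rfl⟩ := Nat.exists_eq_add_one.mpr hn
    refine ⟨hm, ⟨_, hsand.isSandwichValue n.le_succ, hsand.sandwichStep n.lt_succ_self⟩, ?_⟩
    rw [← hsand.ms_succ n n.lt_succ_self]
    exact hsand.halt
  · rintro ⟨hm, hpair, hhalt⟩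
    exact ⟨hm, hpair.exists_isSandwich hhalt⟩

theorem exists_nf (hk : 1 < k) (hm : 0 < m) : ∃ a b c, NF k m a b c := by
  have hstart : Ack k 0 0 ≤ m := by rwa [Ack.zero_left, pow_zero]
  obtain ⟨a₀, b₀, hstep⟩ := exists_sandwichStep hk hstart
  have hpair₀ : IsSandwichPair k m a₀ b₀ := ⟨0, isSandwichValue_zero k m, hstep⟩
  obtain ⟨a, b, hpair, hhalt⟩ := hpair₀.exists_halt hk
  exact ⟨a, b, m - Ack k a b, nf_iff.mpr ⟨by have := hpair.ack_le; omega, hpair, hhalt⟩⟩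

theorem NF.unique (hk : 1 < k) (h : NF k m a b c) (h' : NF k m a' b' c') :
    a = a' ∧ b = b' ∧ c = c' := by
  obtain ⟨hm, hpair, hhalt⟩ := nf_iff.mp h
  obtain ⟨hm', hpair', hhalt'⟩ := nf_iff.mp h'
  obtain ⟨rfl, rfl⟩ := hpair.unique_of_halt hk hhalt hpair' hhalt'
  exact ⟨rfl, rfl, by omega⟩

theorem NF.pos (hk : 1 < k) (h : NF k m a b c) : 0 < m := by
  have := Ack.pos hk a b
  have := h.1
  omega

theorem NF.of_succ_remainder (hk : 1 < k) (h : NF k (m + 1) a b (c + 1)) : NF k m a b c := by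
  obtain ⟨hm, hpair, hhalt⟩ := nf_iff.mp h
  exact nf_iff.mpr ⟨by omega, hpair.of_le hk (by omega) (by omega), by omega⟩

end NormalForm

section BaseChange

variable {k l m v w a b c : ℕ}

theorem exists_bch (hk : 1 < k) (l m : ℕ) : ∃ v, BCH k l m v := by
  induction m using Nat.strong_induction_on with
  | _ m ih =>
    rcases Nat.eq_zero_or_pos m with rfl | hm
    · exact ⟨0, BCH.zero⟩
    · obtain ⟨a, b, c, hnf⟩ := exists_nf hk hm
      have hsum := hnf.1
      have ha := Ack.lt_left hk a b
      have hb := Ack.lt_right hk a b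
      obtain ⟨a', ha'⟩ := ih a (by omega)
      obtain ⟨b', hb'⟩ := ih b (by omega)
      obtain ⟨c', hc'⟩ := ih c (by omega)
      exact ⟨_, BCH.step m a b c a' b' c' hnf ha' hb' hc'⟩

theorem BCH.unique (hk : 1 < k) (hv : BCH k l m v) (hw : BCH k l m w) : v = w := by
  induction hv generalizing w with
  | zero =>
    cases hw with
    | zero => rfl
    | step _ _ _ _ _ _ _ hnf => exact absurd (hnf.pos hk) (lt_irrefl 0)
  | step m a b c a' b' c' hnf _ _ _ iha ihb ihc =>
    cases hw with
    | zero => exact absurd (hnf.pos hk) (lt_irrefl 0)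
    | step _ _ _ _ a'' b'' c'' hnf' ha'' hb'' hc'' =>
      obtain ⟨rfl, rfl, rfl⟩ := hnf.unique hk hnf'
      rw [iha ha'', ihb hb'', ihc hc'']

theorem BCH.eq_self (h : BCH k k m v) : v = m := by
  induction h with
  | zero => rfl
  | step m a b c a' b' c' hnf _ _ _ iha ihb ihc => rw [iha, ihb, ihc, hnf.1]

/-- The base change `⟨k→l⟩m` as a function. It is the unique value related to `m` by `BCH` when
`1 < k`, and unspecified otherwise. -/
noncomputable def baseChange (k l m : ℕ) : ℕ :=
  Classical.epsilon (BCH k l m)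

theorem bch_baseChange (hk : 1 < k) (l m : ℕ) : BCH k l m (baseChange k l m) :=
  Classical.epsilon_spec (exists_bch hk l m)

theorem BCH.eq_baseChange (hk : 1 < k) (h : BCH k l m v) : v = baseChange k l m :=
  h.unique hk (bch_baseChange hk l m)

theorem baseChange_zero (hk : 1 < k) (l : ℕ) : baseChange k l 0 = 0 :=
  (BCH.zero.eq_baseChange hk).symm

theorem NF.baseChange_eq (hk : 1 < k) (l : ℕ) (h : NF k m a b c) :
    baseChange k l m = Ack l (baseChange k l a) (baseChange k l b) + baseChange k l c :=
  ((BCH.step m a b c _ _ _ h (bch_baseChange hk l a) (bch_baseChange hk l b)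
    (bch_baseChange hk l c)).eq_baseChange hk).symm

theorem IsSandwichPair.baseChange_ack (hk : 1 < k) (l : ℕ) (h : IsSandwichPair k m a b) :
    baseChange k l (Ack k a b) = Ack l (baseChange k l a) (baseChange k l b) := by
  have hnf : NF k (Ack k a b) a b 0 :=
    nf_iff.mpr ⟨rfl, h.of_le hk le_rfl h.ack_le, Ack.lt_right hk 0 _⟩
  rw [hnf.baseChange_eq hk, baseChange_zero hk, add_zero]

theorem baseChange_one (hk : 1 < k) (l : ℕ) : baseChange k l 1 = 1 := by
  have hone : Ack k 0 0 = 1 := by rw [Ack.zero_left, pow_zero]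
  have hpair : IsSandwichPair k 1 0 0 := by
    refine (isSandwichValue_zero k 1).isSandwichPair hk ?_ le_rfl hone.le ?_
    · exact hone.symm.trans_lt (Ack.strictMono_left hk 0 Nat.one_pos)
    · exact hone.symm.trans_lt (Ack.strictMono_right hk 0 Nat.one_pos)
  rw [← hone, hpair.baseChange_ack hk, hone, baseChange_zero hk, Ack.zero_left, pow_zero]

theorem IsSandwichPair.baseChange_mul_add (hk : 1 < k) (l : ℕ) (h : IsSandwichPair k m a b)
    (hhalt : m < Ack k 0 (Ack k a b)) {i r : ℕ} (hle : Ack k a b * i + r ≤ m) :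
    baseChange k l (Ack k a b * i + r) =
      i * baseChange k l (Ack k a b) + baseChange k l r := by
  induction i with
  | zero => simp
  | succ i ih =>
    have hsplit : Ack k a b * (i + 1) + r = Ack k a b + (Ack k a b * i + r) := by ring
    rw [hsplit] at hle ⊢
    have hnf : NF k (Ack k a b + (Ack k a b * i + r)) a b (Ack k a b * i + r) :=
      nf_iff.mpr ⟨rfl, h.of_le hk (by omega) hle, by omega⟩
    rw [hnf.baseChange_eq hk, ih (by omega), ← h.baseChange_ack hk]
    ring

theorem IsSandwichPair.baseChange_lt_mul (hk : 1 < k) (h : IsSandwichPair k m a b)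
    (hhalt : m < Ack k 0 (Ack k a b)) (hmono : StrictMonoOn (baseChange k l) (Set.Iic m))
    {M : ℕ} (hm : m + 1 = Ack k a b * M) :
    baseChange k l m < M * baseChange k l (Ack k a b) := by
  obtain ⟨M, rfl⟩ : ∃ i, M = i + 1 :=
    Nat.exists_eq_add_one.mpr (Nat.pos_of_ne_zero (by rintro rfl; omega))
  obtain ⟨r, hr⟩ := Nat.exists_eq_add_one.mpr (Ack.pos hk a b)
  have hsplit : m = Ack k a b * M + r := by
    rw [Nat.mul_succ] at hm
    omega
  have hlt : baseChange k l r < baseChange k l (Ack k a b) :=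
    hmono (Set.mem_Iic.mpr (by omega)) (Set.mem_Iic.mpr h.ack_le) (by omega)
  calc baseChange k l m = M * baseChange k l (Ack k a b) + baseChange k l r := by
        conv_lhs => rw [hsplit]
        exact h.baseChange_mul_add hk l hhalt hsplit.ge
    _ < (M + 1) * baseChange k l (Ack k a b) := by linarith

end BaseChange

section Iteration

variable {k l m z s j N x : ℕ}

theorem IsSandwichValue.baseChange_iterate (hk : 1 < k) (l : ℕ) (hz : IsSandwichValue k m z)
    (hidx : m < Ack k (j + 1) z) (hzs : z ≤ s) (hle : (Ack k j)^[N] s ≤ m) :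
    baseChange k l ((Ack k j)^[N] s) = (Ack l (baseChange k l j))^[N] (baseChange k l s) := by
  induction N with
  | zero => rfl
  | succ N ih =>
    rw [Function.iterate_succ_apply'] at hle
    rw [Function.iterate_succ_apply', Function.iterate_succ_apply']
    have hlt : (Ack k j)^[N] s < Ack k j ((Ack k j)^[N] s) := Ack.lt_right hk j _
    have hzN : z ≤ (Ack k j)^[N] s := by
      have := Ack.add_le_iterate hk j s N
      omega
    have hpair : IsSandwichPair k (Ack k j ((Ack k j)^[N] s)) j ((Ack k j)^[N] s) :=
      (hz.of_le hk (by omega) hle).isSandwichPair hk (by omega) hzN le_rfl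
        (Ack.strictMono_right hk j (Nat.lt_succ_self _))
    rw [hpair.baseChange_ack hk, ih (by omega)]

theorem IsSandwichValue.baseChange_lt_iterate_of_succ_arg (hk : 1 < k) (hl : 1 < l)
    (hmono : StrictMonoOn (baseChange k l) (Set.Iic m)) (hz : IsSandwichValue k m z)
    (hidx : m < Ack k (j + 1) z) (hzs : z ≤ s) (hN : 2 ≤ N) (hm : m + 1 = (Ack k j)^[N] s)
    (hsucc : ∀ x, m + 1 = Ack k j (x + 1) → IsSandwichPair k m j x →
      baseChange k l m < Ack l (baseChange k l j) (baseChange k l x + 1)) :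
    baseChange k l m < (Ack l (baseChange k l j))^[N] (baseChange k l s) := by
  obtain ⟨N, rfl⟩ := Nat.exists_eq_add_of_le' hN
  have hge : N + 1 + s ≤ (Ack k j)^[N + 1] s := Ack.add_le_iterate hk j s (N + 1)
  obtain ⟨x, hx⟩ : ∃ x, (Ack k j)^[N + 1] s = x + 1 := Nat.exists_eq_add_one.mpr (by omega)
  have hmx : m + 1 = Ack k j (x + 1) := by rw [hm, Function.iterate_succ_apply', hx]
  have hxm : x + 1 ≤ m := by
    have := Ack.lt_right hk j (x + 1)
    omega
  have hpair : IsSandwichPair k m j x := by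
    have : Ack k j x < Ack k j (x + 1) := Ack.strictMono_right hk j x.lt_succ_self
    exact hz.isSandwichPair hk hidx (by omega) (by omega) (by omega)
  calc baseChange k l m
      < Ack l (baseChange k l j) (baseChange k l x + 1) := hsucc x hmx hpair
    _ ≤ Ack l (baseChange k l j) (baseChange k l (x + 1)) :=
        (Ack.strictMono_right hl _).monotone
          (hmono (Set.mem_Iic.mpr (by omega)) (Set.mem_Iic.mpr hxm) x.lt_succ_self)
    _ = (Ack l (baseChange k l j))^[N + 2] (baseChange k l s) := by
        rw [← hx, hz.baseChange_iterate hk l hidx hzs (hx ▸ hxm),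
          ← Function.iterate_succ_apply' (Ack l (baseChange k l j))]

theorem IsSandwichPair.baseChange_lt_pow_succ (hk : 1 < k) (hkl : k ≤ l)
    (hmono : StrictMonoOn (baseChange k l) (Set.Iic m)) (h : IsSandwichPair k m 0 x)
    (hm : m + 1 = Ack k 0 (x + 1)) : baseChange k l m < l ^ (baseChange k l x + 1) := by
  have hhalt : m < Ack k 0 (Ack k 0 x) := by
    have := Ack.succ_right_le hk 0 x
    omega
  have hmul : m + 1 = Ack k 0 x * k := by rw [hm, Ack.zero_left, Ack.zero_left, pow_succ]
  calc baseChange k l m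
      < k * baseChange k l (Ack k 0 x) := h.baseChange_lt_mul hk hhalt hmono hmul
    _ = k * l ^ baseChange k l x := by
        rw [h.baseChange_ack hk, baseChange_zero hk, Ack.zero_left]
    _ ≤ l * l ^ baseChange k l x := Nat.mul_le_mul_right _ hkl
    _ = l ^ (baseChange k l x + 1) := (pow_succ' _ _).symm

theorem IsSandwichPair.baseChange_lt_ack_succ (hk : 1 < k) (hkl : k ≤ l)
    (hmono : StrictMonoOn (baseChange k l) (Set.Iic m)) (h : IsSandwichPair k m j x)
    (hm : m + 1 = Ack k j (x + 1)) :
    baseChange k l m < Ack l (baseChange k l j) (baseChange k l x + 1) := by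
  induction j generalizing x with
  | zero =>
    rw [baseChange_zero hk, Ack.zero_left]
    exact h.baseChange_lt_pow_succ hk hkl hmono hm
  | succ j ih =>
    have hidx : m < Ack k (j + 1) (Ack k (j + 1) x) := by
      have := Ack.succ_right_le hk (j + 1) x
      omega
    have hiter : m + 1 = (Ack k j)^[k] (Ack k (j + 1) x) := by
      rw [hm, Ack.succ_left_add, mul_one]
    have hjm : j + 1 ≤ m := (Ack.lt_left hk (j + 1) x).le.trans h.ack_le
    have hj : baseChange k l j < baseChange k l (j + 1) :=
      hmono (Set.mem_Iic.mpr (by omega)) (Set.mem_Iic.mpr hjm) j.lt_succ_self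
    calc baseChange k l m
        < (Ack l (baseChange k l j))^[k] (baseChange k l (Ack k (j + 1) x)) :=
          h.isSandwichValue.baseChange_lt_iterate_of_succ_arg hk (by omega) hmono hidx le_rfl
            (by omega) hiter fun y hy hpair => ih hpair hy
      _ = (Ack l (baseChange k l j))^[k] (Ack l (baseChange k l (j + 1)) (baseChange k l x)) := by
          rw [h.baseChange_ack hk]
      _ ≤ Ack l (baseChange k l (j + 1)) (baseChange k l x + 1) :=
          Ack.iterate_ack_le_of_lt (by omega) hj (by omega)

theorem IsSandwichValue.baseChange_lt_iterate (hk : 1 < k) (hkl : k ≤ l)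
    (hmono : StrictMonoOn (baseChange k l) (Set.Iic m)) (hz : IsSandwichValue k m z)
    (hidx : m < Ack k (j + 1) z) (hzs : z ≤ s) (hN : 2 ≤ N) (hm : m + 1 = (Ack k j)^[N] s) :
    baseChange k l m < (Ack l (baseChange k l j))^[N] (baseChange k l s) :=
  hz.baseChange_lt_iterate_of_succ_arg hk (by omega) hmono hidx hzs hN hm
    fun _ hx hpair => hpair.baseChange_lt_ack_succ hk hkl hmono hx

end Iteration

section Successor

variable {k l m s a b c j p q : ℕ}

theorem NF.baseChange_lt_of_succ_remainder (hk : 1 < k)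
    (hmono : StrictMonoOn (baseChange k l) (Set.Iic m)) (h : NF k (m + 1) a b (c + 1)) :
    baseChange k l m < baseChange k l (m + 1) := by
  have hcm : c + 1 ≤ m := by
    have := Ack.pos hk a b
    have := h.1
    omega
  rw [h.baseChange_eq hk, (h.of_succ_remainder hk).baseChange_eq hk]
  exact Nat.add_lt_add_left
    (hmono (Set.mem_Iic.mpr (by omega)) (Set.mem_Iic.mpr hcm) c.lt_succ_self) _

theorem IsSandwichValue.baseChange_lt_of_lt_arg (hk : 1 < k) (hkl : k ≤ l)
    (hmono : StrictMonoOn (baseChange k l) (Set.Iic m)) (hs : IsSandwichValue k (m + 1) s)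
    (hidx : m + 1 < Ack k (a + 1) s) (hsb : s < b) (hm : m + 1 = Ack k a b) :
    baseChange k l m < Ack l (baseChange k l a) (baseChange k l b) := by
  obtain ⟨x, rfl⟩ := Nat.exists_eq_add_one.mpr (Nat.zero_lt_of_lt hsb)
  have hxm : x + 1 ≤ m := by
    have := Ack.lt_right hk a (x + 1)
    omega
  have hpair : IsSandwichPair k m a x := by
    have : Ack k a x < Ack k a (x + 1) := Ack.strictMono_right hk a x.lt_succ_self
    exact (hs.of_le hk (by omega) (by omega)).isSandwichPair hk (by omega) (by omega) (by omega)
      (by omega)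
  calc baseChange k l m
      < Ack l (baseChange k l a) (baseChange k l x + 1) :=
        hpair.baseChange_lt_ack_succ hk hkl hmono hm
    _ ≤ Ack l (baseChange k l a) (baseChange k l (x + 1)) :=
        (Ack.strictMono_right (by omega) _).monotone
          (hmono (Set.mem_Iic.mpr (by omega)) (Set.mem_Iic.mpr hxm) x.lt_succ_self)

theorem baseChange_lt_ack_zero_right (hk : 1 < k) (hkl : k ≤ l)
    (hmono : StrictMonoOn (baseChange k l) (Set.Iic m)) (hm : m + 1 = Ack k a 0) :
    baseChange k l m < Ack l (baseChange k l a) 0 := by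
  have hl : 1 < l := by omega
  cases a with
  | zero =>
    obtain rfl : m = 0 := by simpa [Ack.zero_left] using hm
    rw [baseChange_zero hk]
    exact Ack.pos hl 0 0
  | succ j =>
    have hjm : j + 1 ≤ m := by
      have := Ack.lt_left hk (j + 1) 0
      omega
    have hj : baseChange k l j < baseChange k l (j + 1) :=
      hmono (Set.mem_Iic.mpr (by omega)) (Set.mem_Iic.mpr hjm) j.lt_succ_self
    have hiter : m + 1 = (Ack k j)^[k] 1 := by rw [hm, Ack.succ_left, zero_add, mul_one]
    calc baseChange k l m
        < (Ack l (baseChange k l j))^[k] (baseChange k l 1) :=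
          (isSandwichValue_zero k m).baseChange_lt_iterate hk hkl hmono (by omega) zero_le_one
            (by omega) hiter
      _ = (Ack l (baseChange k l j))^[k] 1 := by rw [baseChange_one hk]
      _ ≤ Ack l (baseChange k l (j + 1)) 0 := Ack.iterate_one_le_of_lt hl hj (by omega)

theorem IsSandwichPair.baseChange_lt_pow (hk : 1 < k) (hkl : k ≤ l)
    (hmono : StrictMonoOn (baseChange k l) (Set.Iic m)) (h : IsSandwichPair k m p q)
    (hp : 0 < p) (hm : m + 1 = k ^ Ack k p q) :
    baseChange k l m < l ^ baseChange k l (Ack k p q) := by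
  obtain ⟨t, ht⟩ := Ack.exists_eq_of_lt hk hp q
  rw [Ack.zero_left] at ht
  have hhalt : m < Ack k 0 (Ack k p q) := by
    rw [Ack.zero_left]
    omega
  have hmul : m + 1 = Ack k p q * k ^ (k ^ t - t) := by
    rw [hm, ht, ← pow_add, Nat.add_sub_cancel' (Nat.lt_pow_self hk).le]
  have hle : k ^ t ≤ baseChange k l (Ack k p q) :=
    ht.symm.trans_le (hmono.Iic_id_le _ h.ack_le)
  calc baseChange k l m
      < k ^ (k ^ t - t) * baseChange k l (Ack k p q) := h.baseChange_lt_mul hk hhalt hmono hmul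
    _ ≤ k ^ baseChange k l (Ack k p q) := pow_sub_mul_le_pow hk hle
    _ ≤ l ^ baseChange k l (Ack k p q) := Nat.pow_le_pow_left hkl _

theorem IsSandwichPair.baseChange_lt_ack_succ_left (hk : 1 < k) (hkl : k < l)
    (hmono : StrictMonoOn (baseChange k l) (Set.Iic m)) (h : IsSandwichPair k m p q)
    (hjp : j + 1 < p) (hm : m + 1 = Ack k (j + 1) (Ack k p q)) :
    baseChange k l m < Ack l (baseChange k l (j + 1)) (baseChange k l (Ack k p q)) := by
  have hl : 1 < l := by omega
  have hpm : p ≤ m := (Ack.lt_left hk p q).le.trans h.ack_le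
  have hj : baseChange k l j < baseChange k l (j + 1) :=
    hmono (Set.mem_Iic.mpr (by omega)) (Set.mem_Iic.mpr (by omega)) j.lt_succ_self
  have hlevel : baseChange k l (j + 1) < baseChange k l p :=
    hmono (Set.mem_Iic.mpr (by omega)) (Set.mem_Iic.mpr hpm) hjp
  obtain ⟨t, ht⟩ := Ack.exists_eq_of_lt hk hjp q
  obtain ⟨d, hd⟩ := Nat.exists_eq_add_of_lt (ht ▸ Ack.lt_right hk (j + 1) t)
  obtain ⟨T, hT⟩ := Ack.exists_eq_of_lt hl hlevel (baseChange k l q)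
  rw [← h.baseChange_ack hk] at hT
  obtain ⟨D, hD⟩ := Nat.exists_eq_add_of_le (hT ▸ (Ack.lt_right hl _ T).le)
  have hiter : m + 1 = (Ack k j)^[k * (d + 1)] (Ack k p q) := by
    conv_lhs => rw [hm, hd, add_assoc, Ack.succ_left_add, ← ht]
  have hlength : k * (d + 1) ≤ l * D := by
    have hle : Ack k p q ≤ baseChange k l (Ack k p q) := hmono.Iic_id_le _ h.ack_le
    obtain ⟨c, hc⟩ := Nat.exists_eq_add_one.mpr (Nat.zero_lt_of_lt hj)
    have hTl : l * T ≤ baseChange k l (Ack k p q) := by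
      rw [hT, hc]
      exact Ack.mul_le_succ_left hl c T
    nlinarith
  have hN : 2 ≤ k * (d + 1) := by nlinarith
  calc baseChange k l m
      < (Ack l (baseChange k l j))^[k * (d + 1)] (baseChange k l (Ack k p q)) :=
        h.isSandwichValue.baseChange_lt_iterate hk hkl.le hmono (by omega) le_rfl hN hiter
    _ = (Ack l (baseChange k l j))^[k * (d + 1)] (Ack l (baseChange k l (j + 1)) T) := by
        rw [← hT]
    _ ≤ Ack l (baseChange k l (j + 1)) (T + D) := Ack.iterate_ack_le_of_lt hl hj hlength
    _ = Ack l (baseChange k l (j + 1)) (baseChange k l (Ack k p q)) := by rw [← hD]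

theorem SandwichStep.baseChange_lt_of_arg_eq (hk : 1 < k) (hkl : k < l)
    (hmono : StrictMonoOn (baseChange k l) (Set.Iic m)) (hs : IsSandwichValue k (m + 1) s)
    (hstep : SandwichStep k (m + 1) s a s) (hm : m + 1 = Ack k a s) :
    baseChange k l m < Ack l (baseChange k l a) (baseChange k l s) := by
  rcases hs.eq_zero_or_exists_pair with rfl | ⟨p, q, hpair, rfl⟩
  · rw [baseChange_zero hk]
    exact baseChange_lt_ack_zero_right hk hkl.le hmono hm
  · have hap : a < p := hpair.idx_lt hk hstep
    have hpair_m : IsSandwichPair k m p q := by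
      have := hstep.lt_ack hk
      exact hpair.of_le hk (by omega) m.le_succ
    cases a with
    | zero =>
      rw [baseChange_zero hk, Ack.zero_left]
      exact hpair_m.baseChange_lt_pow hk hkl.le hmono hap (Ack.zero_left k _ ▸ hm)
    | succ j => exact hpair_m.baseChange_lt_ack_succ_left hk hkl hmono hap hm

theorem baseChange_lt_succ (hk : 1 < k) (hkl : k < l)
    (hmono : StrictMonoOn (baseChange k l) (Set.Iic m)) :
    baseChange k l m < baseChange k l (m + 1) := by
  obtain ⟨a, b, c, hnf⟩ := exists_nf hk m.succ_pos
  cases c with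
  | succ c => exact hnf.baseChange_lt_of_succ_remainder hk hmono
  | zero =>
    rw [hnf.baseChange_eq hk, baseChange_zero hk, add_zero]
    obtain ⟨hm, ⟨s, hs, hstep⟩, -⟩ := nf_iff.mp hnf
    rcases (hstep.le_arg hk).lt_or_eq with hsb | rfl
    · exact hs.baseChange_lt_of_lt_arg hk hkl.le hmono hstep.idx_hi hsb hm
    · exact hstep.baseChange_lt_of_arg_eq hk hkl hmono hs hm

theorem strictMono_baseChange (hk : 1 < k) (hkl : k < l) : StrictMono (baseChange k l) := by
  refine strictMono_nat_of_lt_succ fun m => ?_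
  induction m using Nat.strong_induction_on with
  | _ m ih => exact baseChange_lt_succ hk hkl (strictMonoOn_Iic_of_lt_succ ih)

end Successor

theorem stmt_16 (k l n m vn vm : ℕ) (hk : 1 < k) (hkl : k ≤ l) (hnm : n < m)
    (h1 : BCH k l n vn) (h2 : BCH k l m vm) : vn < vm := by
  rcases hkl.eq_or_lt with rfl | hlt
  · rwa [h1.eq_self, h2.eq_self]
  · rw [h1.eq_baseChange hk, h2.eq_baseChange hk]
    exact strictMono_baseChange hk hlt hnm
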